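/- Let W be a cyclically reduced nonperiodic word in a bi-ordered free group (F, ≺). Then the maximal ascent A of W is uniquely positioned: A is a prefix of exactly one element of the set of cyclic permutations of W and W⁻¹. -/

import Mathlib

variable {X : Type*}

/-- A word over `X ∪ X⁻¹` (a letter is a generator with a sign) is reduced if no
letter is immediately followed by its inverse. -/
def Reduced (w : List (X × Bool)) : Prop :=
  w.Chain' fun a b => a.1 = b.1 → a.2 = b.2

/-- A word is cyclically reduced if it is reduced and its first letter is not the
inverse of its last letter. -/
def CyclicallyReduced (w : List (X × Bool)) : Prop :=
  Reduced w ∧ ∀ a ∈ w.head?, ∀ b ∈ w.getLast?, (a.1 = b.1 → a.2 = b.2)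

/-- A word is periodic if it is a concatenation of `k > 1` copies of some word. -/
def Periodic (w : List (X × Bool)) : Prop :=
  ∃ (U : List (X × Bool)) (k : ℕ), 1 < k ∧ w = (List.replicate k U).flatten

section Order
variable [LinearOrder (FreeGroup X)]

/-- A word is an ascent (w.r.t. an order on the free group) if it is nonempty and
every nonempty prefix and every nonempty suffix represents an element `≻ 1`. -/
def IsAscent (w : List (X × Bool)) : Prop :=
  w ≠ [] ∧ (∀ i, 0 < i → i ≤ w.length → 1 < FreeGroup.mk (w.take i)) ∧
    (∀ i, i < w.length → 1 < FreeGroup.mk (w.drop i))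

/-- A word is a descent if it is nonempty and every nonempty prefix and every
nonempty suffix represents an element `≺ 1`. -/
def IsDescent (w : List (X × Bool)) : Prop :=
  w ≠ [] ∧ (∀ i, 0 < i → i ≤ w.length → FreeGroup.mk (w.take i) < 1) ∧
    (∀ i, i < w.length → FreeGroup.mk (w.drop i) < 1)

/-- `B` occurs as a subword of some cyclic permutation of `W` or of `W⁻¹`. -/
def InRW (W B : List (X × Bool)) : Prop :=
  ∃ W', (List.IsRotated W W' ∨ List.IsRotated (FreeGroup.invRev W) W') ∧ B <:+: W'

/-- `A` is the maximal ascent of `W`: an ascent occurring as a subword of a cyclic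
permutation of `W` or `W⁻¹`, and `⪰` every such ascent. -/
def IsMaxAscent (W A : List (X × Bool)) : Prop :=
  IsAscent A ∧ InRW W A ∧
    ∀ B, IsAscent B → InRW W B → FreeGroup.mk B ≤ FreeGroup.mk A

end Order

set_option linter.unusedSectionVars false

namespace MaxAscent

theorem infix_of_eq {α : Type*} {a b c l : List α} (h : l = a ++ b ++ c) : b <:+: l :=
  ⟨a, c, h.symm⟩

theorem isRotated_decomp {α : Type*} {l m : List α} (h : List.IsRotated l m) :
    ∃ S T, l = S ++ T ∧ m = T ++ S := by
  obtain ⟨n, hn, rfl⟩ := List.isRotated_iff_mod.1 h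
  refine ⟨l.take n, l.drop n, by simp, ?_⟩
  rw [List.rotate_eq_drop_append_take hn]

theorem invRev_rot {l m : List (X × Bool)} (h : List.IsRotated l m) :
    List.IsRotated (FreeGroup.invRev l) (FreeGroup.invRev m) := by
  obtain ⟨S, T, rfl, rfl⟩ := isRotated_decomp h
  rw [FreeGroup.invRev_append, FreeGroup.invRev_append]
  exact List.isRotated_append

theorem invRev_reduced {l : List (X × Bool)} (h : FreeGroup.IsReduced l) :
    FreeGroup.IsReduced (FreeGroup.invRev l) := by
  classical
  rw [FreeGroup.isReduced_iff_reduce_eq] at h ⊢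
  rw [FreeGroup.reduce_invRev, h]

theorem invRev_infix {l m : List (X × Bool)} (h : l <:+: m) :
    FreeGroup.invRev l <:+: FreeGroup.invRev m := by
  obtain ⟨s, t, rfl⟩ := h
  exact ⟨FreeGroup.invRev t, FreeGroup.invRev s, by simp [FreeGroup.invRev_append]⟩

theorem rot_reduced {W m : List (X × Bool)} (hW : CyclicallyReduced W)
    (h : List.IsRotated W m) : FreeGroup.IsReduced m := by
  have hc : FreeGroup.IsCyclicallyReduced W :=
    ⟨hW.1, fun a ha b hb hab => (hW.2 b hb a ha hab.symm).symm⟩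
  obtain ⟨S, T, rfl, rfl⟩ := isRotated_decomp h
  have h2 := (hc.flatten_replicate 2).isReduced
  exact h2.infix ⟨S, T, by simp [List.replicate_succ]⟩

theorem inRW_reduced {W B : List (X × Bool)} (hW : CyclicallyReduced W)
    (h : InRW W B) : FreeGroup.IsReduced B := by
  obtain ⟨W', h1 | h1, h2⟩ := h
  · exact (rot_reduced hW h1).infix h2
  · have := invRev_rot h1
    rw [FreeGroup.invRev_invRev] at this
    have := invRev_reduced (rot_reduced hW this)
    rw [FreeGroup.invRev_invRev] at this
    exact this.infix h2

theorem inRW_infix {W B C : List (X × Bool)} (h : InRW W B) (hC : C <:+: B) : InRW W C := by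
  obtain ⟨W', h1, h2⟩ := h
  exact ⟨W', h1, hC.trans h2⟩

theorem inRW_inv {W B : List (X × Bool)} (h : InRW W B) : InRW W (FreeGroup.invRev B) := by
  obtain ⟨W', h1 | h1, h2⟩ := h
  · exact ⟨_, Or.inr (invRev_rot h1), invRev_infix h2⟩
  · have := invRev_rot h1
    rw [FreeGroup.invRev_invRev] at this
    exact ⟨_, Or.inl this, invRev_infix h2⟩

theorem mk_append (a b : List (X × Bool)) :
    FreeGroup.mk (a ++ b) = FreeGroup.mk a * FreeGroup.mk b := FreeGroup.mul_mk.symm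

section
variable [LinearOrder (FreeGroup X)]

theorem asc_pre {A P Q : List (X × Bool)} (hA : IsAscent A) (h : A = P ++ Q) (hP : P ≠ []) :
    1 < FreeGroup.mk P := by
  have := hA.2.1 P.length (List.length_pos_iff.2 hP) (by simp [h])
  simpa [h] using this

theorem asc_suf {A P Q : List (X × Bool)} (hA : IsAscent A) (h : A = P ++ Q) (hQ : Q ≠ []) :
    1 < FreeGroup.mk Q := by
  have := hA.2.2 P.length (by have := List.length_pos_iff.2 hQ; simp [h]; omega)
  simpa [h] using this

variable [MulLeftMono (FreeGroup X)] [MulRightMono (FreeGroup X)]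

theorem le_one_left {a b : FreeGroup X} (h : a * b ≤ b) : a ≤ 1 := by
  simpa using h

theorem le_one_right {a b : FreeGroup X} (h : a * b ≤ a) : b ≤ 1 := by
  simpa using h

theorem one_le_of_inv {a b : FreeGroup X} (h : b⁻¹ ≤ a) : 1 ≤ a * b := by
  have := mul_le_mul_left h b
  simpa only [inv_mul_cancel] using this

/-- The maximal ascent dominates every subword. -/
theorem le_max {W A : List (X × Bool)} (hmax : IsMaxAscent W A) :
    ∀ (n : ℕ) (B : List (X × Bool)), B.length ≤ n → InRW W B →
      FreeGroup.mk B ≤ FreeGroup.mk A := by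
  have hA1 : (1 : FreeGroup X) < FreeGroup.mk A :=
    asc_pre (Q := []) hmax.1 (by simp) hmax.1.1
  intro n
  induction n with
  | zero =>
    intro B hB _
    have : B = [] := List.length_eq_zero_iff.1 (by omega)
    subst this
    exact hA1.le
  | succ n ih =>
    intro B hB hR
    by_cases hasc : IsAscent B
    · exact hmax.2.2 B hasc hR
    by_cases hnil : B = []
    · subst hnil
      exact hA1.le
    unfold IsAscent at hasc
    rw [not_and_or, not_and_or] at hasc
    rcases hasc with h | h | h
    · exact absurd hnil h
    · push Not at h
      obtain ⟨i, hi0, hi, hle⟩ := h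
      have e : B = B.take i ++ B.drop i := by simp
      have h1 : FreeGroup.mk (B.drop i) ≤ FreeGroup.mk A :=
        ih _ (by simp; omega) (inRW_infix hR (List.drop_suffix i B).isInfix)
      have e2 : FreeGroup.mk B = FreeGroup.mk (B.take i) * FreeGroup.mk (B.drop i) := by
        rw [← mk_append, ← e]
      rw [e2]
      exact (mul_le_of_le_one_left' hle).trans h1
    · push Not at h
      obtain ⟨i, hi, hle⟩ := h
      have e : B = B.take i ++ B.drop i := by simp
      have h1 : FreeGroup.mk (B.take i) ≤ FreeGroup.mk A :=
        ih _ (by simp; omega) (inRW_infix hR (List.take_prefix i B).isInfix)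
      have e2 : FreeGroup.mk B = FreeGroup.mk (B.take i) * FreeGroup.mk (B.drop i) := by
        rw [← mk_append, ← e]
      rw [e2]
      exact (mul_le_of_le_one_right' hle).trans h1

/-- The combinatorial core of the doubly-overlapping case. -/
theorem core : ∀ (n : ℕ) (Q Q' C C' : List (X × Bool)), (Q' ++ C' ++ Q).length ≤ n →
    Q' ++ C' ++ Q = Q ++ C ++ Q' → C ≠ [] → C' ≠ [] →
    (∀ P S, Q' ++ C' ++ Q = P ++ S → S ≠ [] → 1 < FreeGroup.mk S) →
    (∀ P S, C = P ++ S → FreeGroup.mk P ≤ 1) →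
    (∀ P S, C' = P ++ S → FreeGroup.mk P ≤ 1) → C = C' := by
  intro n
  induction n with
  | zero =>
    intro Q Q' C C' hn _ _ hC'
    have := List.length_pos_iff.2 hC'
    simp at hn
    exact absurd hn.2.1 hC'
  | succ n ih =>
    have step : ∀ (Q Q' C C' T : List (X × Bool)), (Q' ++ C' ++ Q).length ≤ n + 1 →
      Q' ++ C' ++ Q = Q ++ C ++ Q' → C ≠ [] → C' ≠ [] →
      (∀ P S, Q' ++ C' ++ Q = P ++ S → S ≠ [] → 1 < FreeGroup.mk S) →
      (∀ P S, C = P ++ S → FreeGroup.mk P ≤ 1) →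
      (∀ P S, C' = P ++ S → FreeGroup.mk P ≤ 1) → Q = Q' ++ T → C = C' := by
      intro Q Q' C C' T hn he hC hC' hs hp hp' hQ
      by_cases hT : T = []
      · subst hT
        simp only [List.append_nil] at hQ
        subst hQ
        simpa using he.symm
      have hT1 : 1 < FreeGroup.mk T := hs (Q' ++ C' ++ Q') T (by simp [hQ]) hT
      have he2 : C' ++ Q = T ++ (C ++ Q') := by
        have : Q' ++ (C' ++ Q) = Q' ++ (T ++ (C ++ Q')) := by
          rw [← List.append_assoc, he]; simp [hQ]
        exact List.append_cancel_left this
      rcases List.append_eq_append_iff.1 he2 with ⟨S, hS1, hS2⟩ | ⟨S, hS1, hS2⟩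
      · have e : Q' ++ C' ++ S = S ++ C ++ Q' := by
          rw [List.append_assoc, ← hS1, ← hQ, hS2, List.append_assoc]
        have hQe : Q = Q' ++ C' ++ S := by rw [hQ, hS1]; simp
        refine ih S Q' C C' ?_ e hC hC' ?_ hp hp'
        · rw [← hQe]
          have := List.length_pos_iff.2 hC'
          simp at hn
          omega
        · intro P U hPU hU
          refine hs (Q' ++ C' ++ P) U ?_ hU
          rw [← hQe] at hPU
          rw [hPU]; simp
      · exact absurd (hp' T S hS1) (not_le.2 hT1)
    intro Q Q' C C' hn he hC hC' hs hp hp'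
    have he' := he
    rw [List.append_assoc, List.append_assoc] at he'
    rcases List.append_eq_append_iff.1 he' with ⟨T, hT, _⟩ | ⟨T, hT, _⟩
    · exact step Q Q' C C' T hn he hC hC' hs hp hp' hT
    · refine (step Q' Q C' C T ?_ he.symm hC' hC ?_ hp' hp hT).symm
      · rw [← he]; exact hn
      · rw [← he]; exact hs

theorem no_cancel {W A : List (X × Bool)} (hcr : CyclicallyReduced W) (hA : A ≠ [])
    (h : InRW W (A ++ FreeGroup.invRev A)) : False := by
  classical
  have h1 := inRW_reduced hcr h
  rw [FreeGroup.isReduced_iff_reduce_eq] at h1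
  have h2 : FreeGroup.mk (A ++ FreeGroup.invRev A) = FreeGroup.mk [] := by
    rw [mk_append, ← FreeGroup.inv_mk, mul_inv_cancel]; rfl
  have := FreeGroup.reduce.sound h2
  rw [h1] at this
  simp at this
  exact hA this.1

theorem same_side {W A S T : List (X × Bool)} (hcr : CyclicallyReduced W)
    (hmax : IsMaxAscent W A) (h1 : InRW W (S ++ T)) (h2 : InRW W (T ++ S))
    (p1 : A <+: S ++ T) (p2 : A <+: T ++ S) : S ++ T = T ++ S := by
  classical
  by_cases hS : S = []
  · simp [hS]
  by_cases hT : T = []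
  · simp [hT]
  have le : ∀ B, InRW W B → FreeGroup.mk B ≤ FreeGroup.mk A :=
    fun B hB => le_max hmax _ B le_rfl hB
  have single : ∀ S T Q D : List (X × Bool), S ≠ [] → InRW W (S ++ T) → A = S ++ Q →
      T = A ++ D → False := by
    intro S T Q D hS hR hA hT
    have := le (S ++ A) (inRW_infix hR (infix_of_eq (a := []) (c := D) (by simp [hT])))
    rw [mk_append] at this
    have h3 : FreeGroup.mk S ≤ 1 := le_one_left this
    exact absurd (asc_pre hmax.1 hA hS) (not_lt.2 h3)
  obtain ⟨C, hC⟩ := p1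
  obtain ⟨C', hC'⟩ := p2
  rcases List.append_eq_append_iff.1 hC with ⟨E, hE, hE2⟩ | ⟨Q, hQ, hQ2⟩
  · rcases List.append_eq_append_iff.1 hC' with ⟨D, hD, hD2⟩ | ⟨Q', hQ', hQ2'⟩
    · exfalso
      have i1 := le (A ++ E ++ A) (inRW_infix h1 (infix_of_eq (a := []) (c := D)
        (by simp [hE, hD])))
      have i2 : InRW W (A ++ E) := inRW_infix h1 (infix_of_eq (a := []) (c := T) (by simp [hE]))
      have i3 : InRW W E := inRW_infix i2 (infix_of_eq (a := A) (c := []) (by simp))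
      have i4 := le _ (inRW_inv i3)
      rw [mk_append] at i1
      have i5 : FreeGroup.mk A * FreeGroup.mk E ≤ 1 := by
        rw [← mk_append]; exact le_one_left i1
      rw [← FreeGroup.inv_mk] at i4
      have i6 : 1 ≤ FreeGroup.mk A * FreeGroup.mk E := one_le_of_inv i4
      have i7 : FreeGroup.mk E = FreeGroup.mk (FreeGroup.invRev A) := by
        rw [← FreeGroup.inv_mk]
        exact eq_inv_of_mul_eq_one_right (le_antisymm i5 i6)
      have i8 := FreeGroup.reduce.sound i7
      rw [FreeGroup.isReduced_iff_reduce_eq.1 (inRW_reduced hcr i3),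
        FreeGroup.isReduced_iff_reduce_eq.1 (inRW_reduced hcr (inRW_inv hmax.2.1))] at i8
      rw [i8] at i2
      exact no_cancel hcr hmax.1.1 i2
    · exact (single T S Q' E hT h2 hQ' hE).elim
  · rcases List.append_eq_append_iff.1 hC' with ⟨D, hD, hD2⟩ | ⟨Q', hQ', hQ2'⟩
    · exact (single S T Q D hS h1 hQ hD).elim
    · have hlen : C.length = C'.length := by
        have a1 := congrArg List.length hC
        have a2 := congrArg List.length hC'
        simp at a1 a2
        omega
      by_cases hCn : C = []
      · have : C' = [] := by
          apply List.length_eq_zero_iff.1; rw [← hlen, hCn]; rfl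
        rw [← hC, ← hC', hCn, this]
      have hCn' : C' ≠ [] := by
        intro h; apply hCn; apply List.length_eq_zero_iff.1; rw [hlen, h]; rfl
      have pre : ∀ V C : List (X × Bool), InRW W V → A ++ C = V →
          ∀ P S, C = P ++ S → FreeGroup.mk P ≤ 1 := by
        intro V C hV hVC P S hPS
        have := le (A ++ P) (inRW_infix hV (infix_of_eq (a := []) (c := S)
          (by rw [← hVC, hPS]; simp)))
        rw [mk_append] at this
        exact le_one_right this
      have eA : A = Q' ++ C' ++ Q := by rw [← hQ2', ← hQ]
      have eA2 : A = Q ++ C ++ Q' := by rw [← hQ2, ← hQ']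
      have := core _ Q Q' C C' le_rfl (eA.symm.trans eA2) hCn hCn'
        (fun P S h hS => asc_suf hmax.1 (eA.trans h) hS) (pre _ C h1 hC) (pre _ C' h2 hC')
      rw [← hC, ← hC', this]

theorem not_both {Y : List (X × Bool)} (h1 : 1 < FreeGroup.mk Y)
    (h2 : 1 < FreeGroup.mk (FreeGroup.invRev Y)) : False := by
  rw [← FreeGroup.inv_mk] at h2
  have := mul_le_mul_left h2.le (FreeGroup.mk Y)
  simp only [one_mul, inv_mul_cancel] at this
  exact absurd h1 (not_lt.2 this)

theorem opp_aux {W A S T C Z : List (X × Bool)} (hcr : CyclicallyReduced W)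
    (hmax : IsMaxAscent W A) (h1 : InRW W S) (hS : S = A ++ C)
    (hZ : Z ++ FreeGroup.invRev A = T ++ S) : False := by
  classical
  have le : ∀ B, InRW W B → FreeGroup.mk B ≤ FreeGroup.mk A :=
    fun B hB => le_max hmax _ B le_rfl hB
  rw [hS, ← List.append_assoc] at hZ
  rcases List.append_eq_append_iff.1 hZ with ⟨Y, hY, hY2⟩ | ⟨E, hE, hE2⟩
  · by_cases hYn : Y = []
    · subst hYn
      simp only [List.nil_append] at hY2
      rw [hS, ← hY2] at h1
      exact no_cancel hcr hmax.1.1 h1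
    have hAY : A = FreeGroup.invRev C ++ FreeGroup.invRev Y := by
      rw [← FreeGroup.invRev_append, ← hY2, FreeGroup.invRev_invRev]
    have y1 : 1 < FreeGroup.mk (FreeGroup.invRev Y) := asc_suf hmax.1 hAY (by
      intro h; apply hYn; rw [← FreeGroup.invRev_invRev (L₁ := Y), h]; rfl)
    rcases List.append_eq_append_iff.1 hY with ⟨P, hP, hP2⟩ | ⟨P, hP, hP2⟩
    · exact not_both (asc_suf hmax.1 hP2 hYn) y1
    · have l1 := congrArg List.length hP2
      have l2 := congrArg List.length hAY
      simp [FreeGroup.invRev_length] at l1 l2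
      have : P = [] := List.length_eq_zero_iff.1 (by omega)
      subst this
      exact not_both (asc_suf (P := []) hmax.1 (by simpa using hP2.symm) hYn) y1
  · have i1 := le (A ++ E) (inRW_infix h1 (infix_of_eq (a := []) (c := FreeGroup.invRev A)
      (by simp [hS, hE2])))
    have hE' : InRW W (E ++ FreeGroup.invRev A) :=
      inRW_infix h1 (infix_of_eq (a := A) (c := []) (by simp [hS, hE2]))
    have i2 := le _ (inRW_inv hE')
    rw [FreeGroup.invRev_append, FreeGroup.invRev_invRev, mk_append, ← FreeGroup.inv_mk] at i2
    rw [mk_append] at i1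
    have i3 : FreeGroup.mk E ≤ 1 := le_one_right i1
    have i4 : (FreeGroup.mk E)⁻¹ ≤ 1 := le_one_right i2
    have i5 : 1 ≤ FreeGroup.mk E := by
      have := one_le_of_inv i4
      rwa [one_mul] at this
    have i6 : FreeGroup.mk E = FreeGroup.mk [] := le_antisymm i3 i5
    have i7 := FreeGroup.reduce.sound i6
    rw [FreeGroup.isReduced_iff_reduce_eq.1 (inRW_reduced hcr (inRW_infix hE'
      (infix_of_eq (a := []) rfl)))] at i7
    simp at i7
    rw [hS, hE2, i7] at h1
    exact no_cancel hcr hmax.1.1 (by simpa using h1)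

theorem opp_side {W A U V : List (X × Bool)} (hcr : CyclicallyReduced W)
    (hmax : IsMaxAscent W A) (h1 : List.IsRotated W U)
    (h2 : List.IsRotated (FreeGroup.invRev W) V) (p1 : A <+: U) (p2 : A <+: V) : False := by
  have h3 := invRev_rot h2
  rw [FreeGroup.invRev_invRev] at h3
  have hU : InRW W U := ⟨U, Or.inl h1, List.infix_rfl⟩
  obtain ⟨S, T, hU2, hV2⟩ := isRotated_decomp (h1.symm.trans h3)
  obtain ⟨C, hC⟩ := p1
  obtain ⟨D, hD⟩ := p2
  have hZ : FreeGroup.invRev D ++ FreeGroup.invRev A = T ++ S := by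
    rw [← hV2, ← hD, FreeGroup.invRev_append]
  rcases S.eq_nil_or_concat with hS | ⟨_, _, hS⟩
  · subst hS
    simp only [List.nil_append, List.append_nil] at hU2 hZ
    exact opp_aux (T := []) hcr hmax hU hC.symm (by simpa [hU2] using hZ)
  have hSn : S ≠ [] := by simp [hS]
  clear hS
  rw [hU2] at hC
  rcases List.append_eq_append_iff.1 hC with ⟨E, hE, hE2⟩ | ⟨Q, hQ, hQ2⟩
  · exact opp_aux hcr hmax (inRW_infix hU (infix_of_eq (a := []) (c := T) (by simp [hU2])))
      hE hZ
  · rw [hQ, FreeGroup.invRev_append, ← List.append_assoc] at hZ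
    have := List.append_inj_right' hZ FreeGroup.invRev_length
    have s1 := asc_pre hmax.1 hQ hSn
    exact not_both s1 (by rw [this]; exact s1)

theorem main {W A : List (X × Bool)} (hcr : CyclicallyReduced W)
    (hmax : IsMaxAscent W A) :
    ∃! W', (List.IsRotated W W' ∨ List.IsRotated (FreeGroup.invRev W) W') ∧ A <+: W' := by
  obtain ⟨W', hW', s, t, hst⟩ := hmax.2.1
  have hr : List.IsRotated W' (A ++ (t ++ s)) := by
    rw [← hst, ← List.append_assoc A t s, List.append_assoc s A t]
    exact List.isRotated_append
  refine existsUnique_of_exists_of_unique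
    ⟨A ++ (t ++ s), hW'.imp (·.trans hr) (·.trans hr), List.prefix_append _ _⟩ ?_
  rintro U V ⟨hU, pU⟩ ⟨hV, pV⟩
  have same : List.IsRotated U V → U = V := by
    intro h
    have rU : InRW W U := ⟨U, hU, List.infix_rfl⟩
    have rV : InRW W V := ⟨V, hV, List.infix_rfl⟩
    obtain ⟨S, T, rfl, rfl⟩ := isRotated_decomp h
    exact same_side hcr hmax rU rV pU pV
  rcases hU with hU | hU <;> rcases hV with hV | hV
  · exact same (hU.symm.trans hV)
  · exact (opp_side hcr hmax hU hV pU pV).elim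
  · exact (opp_side hcr hmax hV hU pV pU).elim
  · exact same (hU.symm.trans hV)

end
end MaxAscent

/-- If `W` is a cyclically reduced nonperiodic word in a bi-ordered free group,
then its maximal ascent `A` is uniquely positioned: `A` is a prefix of exactly one
cyclic permutation of `W` or `W⁻¹`. -/
theorem max_ascent_uniquely_positioned [LinearOrder (FreeGroup X)]
    [CovariantClass (FreeGroup X) (FreeGroup X) (· * ·) (· < ·)]
    [CovariantClass (FreeGroup X) (FreeGroup X) (Function.swap (· * ·)) (· < ·)]
    (W A : List (X × Bool)) (hcr : CyclicallyReduced W) (hnp : ¬ Periodic W)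
    (hmax : IsMaxAscent W A) :
    ∃! W', (List.IsRotated W W' ∨ List.IsRotated (FreeGroup.invRev W) W') ∧ A <+: W' := by
  haveI : MulLeftMono (FreeGroup X) := covariantClass_le_of_lt _ _ _
  haveI : MulRightMono (FreeGroup X) := covariantClass_le_of_lt _ _ _
  exact MaxAscent.main hcr hmax
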